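/- Fix B with 1 < B < ∞ and let 𝔉₁(B) be the set of irrational x ∈ (0,1) such that a_{n−1}(x)a_n(x) ≥ B^n and a_n(x)a_{n+1}(x) ≥ B^n for infinitely many n ∈ ℕ. Then the Hausdorff dimension of 𝔉₁(B) is at most s_B. -/

import Mathlib

/-!
The bound comes from an explicit covering. Write `N = B ^ n`, let `q` be the continuant of
`(a_1, …, a_{n-2})`, put `a = a_{n-1}`, `b = a_n`, `c = a_{n+1}`, and let `1/2 < t < 1`. The points
with `a b ≥ N` and `b c ≥ N` fall into two classes (`mem_cover`).

* If `b ≥ N ^ t`, then `x = [a_1, …, a_{n-2}, a + z]` with `0 ≤ z ≤ min (a / N) (N ^ (-t))`, an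
  interval of length at most `min (a / N) (N ^ (-t)) / (a q)²`.
* If `b < N ^ t`, then `a > N ^ (1 - t)` and `x = [a_1, …, a_{n-2}, a, b + z]` with
  `0 ≤ z ≤ b / N`, an interval of length at most `(b / N) / (a b q)²`.

The lengths follow from `cfMap_dist`: an inverse branch of the iterated Gauss map contracts by the
inverse square of its continuant. Summing the `t`-th powers over `a` and `b` gives
`q ^ (-2t) N ^ (ε - (3t - 1 - t²))` up to a constant, for every small `ε > 0`; the threshold
`N ^ t` balances the two classes. To avoid estimates of partial sums, each term is compared with
`a ^ (-1-ε) b ^ (-1-ε)` (`rpow_bound_zero`, `rpow_bound_pos`), whose sum converges.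

If `P_B(s) ≤ 0` and `s < t < 1`, then `3t - 1 - t² > 3s - 1 - s²`, so the total size of the
covering of level `n` decays geometrically (`tsum_cover_le`, `eventually_presSum_le`), and the
Borel–Cantelli argument `hausdorffMeasure_limsup_eq_zero` yields a null set for the `t`-dimensional
Hausdorff measure. Here `s > 1/2` is automatic because the pressure is infinite otherwise
(`half_lt_of_presSum_ne_top`). The infimum defining `s_B` is over a nonempty set, as it contains
`s = 1`: the sums `∑ q_n ^ (-2)` are bounded by a telescoping argument (`tsum_words_le`).
-/

open scoped ENNReal
open MeasureTheory Filter

/-- The Gauss map `T(x) = 1/x - ⌊1/x⌋`. -/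
noncomputable def gaussMap (x : ℝ) : ℝ := 1 / x - ⌊1 / x⌋

/-- The `n`-th partial quotient `a_n(x) = ⌊1 / T^{n-1}(x)⌋` (for `n ≥ 1`). -/
noncomputable def pq (x : ℝ) (n : ℕ) : ℕ := ⌊1 / (gaussMap^[n - 1] x)⌋₊

/-- The set `F₂(φ)` of irrational `x ∈ (0,1)` such that for infinitely many `n` there are
`1 ≤ k ≠ l ≤ n` with `a_k a_{k+1} ≥ φ(n)` and `a_l a_{l+1} ≥ φ(n)`. -/
def F2 (φ : ℕ → ℝ) : Set ℝ :=
  {x | x ∈ Set.Ioo (0 : ℝ) 1 ∧ Irrational x ∧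
    {n : ℕ | ∃ k l : ℕ, 1 ≤ k ∧ k ≤ n ∧ 1 ≤ l ∧ l ≤ n ∧ k ≠ l ∧
      φ n ≤ (pq x k : ℝ) * (pq x (k + 1) : ℝ) ∧
      φ n ≤ (pq x l : ℝ) * (pq x (l + 1) : ℝ)}.Infinite}

/-- The continuant `q_n(a_1,…,a_n)` of a word, via `q_{-1} = 0`, `q_0 = 1`,
`q_n = a_n q_{n-1} + q_{n-2}` (the pair holds `(q_{k}, q_{k-1})`). -/
def contQ (l : List ℕ) : ℕ :=
  (l.foldl (fun p a => (a * p.1 + p.2, p.1)) ((1 : ℕ), (0 : ℕ))).1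

/-- `Σ_{(a_1,…,a_n) ∈ ℕⁿ} B^{-n(3s-1-s²)} q_n(a_1,…,a_n)^{-2s}` as an extended nonnegative
real number. -/
noncomputable def presSum (B s : ℝ) (n : ℕ) : ℝ≥0∞ :=
  ∑' v : Fin n → ℕ+,
    ENNReal.ofReal (B ^ (-(n : ℝ) * (3 * s - 1 - s ^ 2)) *
      (contQ (List.ofFn fun i => ((v i : ℕ))) : ℝ) ^ (-(2 * s)))

/-- The pressure function `P_B(s) = lim_n (1/n) log presSum B s n ∈ (-∞,∞]`
(the limit exists, hence equals the `limsup`). -/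
noncomputable def pressure (B s : ℝ) : EReal :=
  Filter.atTop.limsup fun n : ℕ => (((n : ℝ)⁻¹ : ℝ) : EReal) * ENNReal.log (presSum B s n)

/-- `s_B = inf {s ≥ 0 : P_B(s) ≤ 0}`. -/
noncomputable def sB (B : ℝ) : ℝ := sInf {s : ℝ | 0 ≤ s ∧ pressure B s ≤ 0}


/-! ### Continuants and inverse branches of the Gauss map -/

/-- One step `(q_k, q_{k-1}) ↦ (q_{k+1}, q_k)` of the continuant recursion with digit `a`. -/
def contStep (p : ℕ × ℕ) (a : ℕ) : ℕ × ℕ := (a * p.1 + p.2, p.1)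

lemma contQ_eq (l : List ℕ) : contQ l = (l.foldl contStep (1, 0)).1 := rfl

/-- The inverse branch `y ↦ [a_1, …, a_n + y]` of the `n`-th iterate of the Gauss map that
belongs to the word `(a_1, …, a_n)`. -/
noncomputable def cfMap : List ℕ → ℝ → ℝ
  | [], y => y
  | a :: l, y => 1 / (a + cfMap l y)

lemma cfMap_nonneg (l : List ℕ) {y : ℝ} (hy : 0 ≤ y) : 0 ≤ cfMap l y := by
  induction l with
  | nil => exact hy
  | cons a l ih => simp only [cfMap]; positivity

lemma foldl_contStep_pos (l : List ℕ) (hl : ∀ a ∈ l, 1 ≤ a) (p : ℕ × ℕ) (hp : 1 ≤ p.1) :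
    1 ≤ (l.foldl contStep p).1 := by
  induction l generalizing p with
  | nil => exact hp
  | cons a l ih =>
    simp only [List.mem_cons, forall_eq_or_imp] at hl
    refine ih hl.2 _ ?_
    have := Nat.mul_le_mul hl.1 hp
    simp only [contStep]; omega

lemma contQ_pos (l : List ℕ) (hl : ∀ a ∈ l, 1 ≤ a) : 1 ≤ contQ l :=
  foldl_contStep_pos l hl _ le_rfl

lemma contQ_append_singleton (l : List ℕ) (a : ℕ) : a * contQ l ≤ contQ (l ++ [a]) := by
  simp [contQ_eq, List.foldl_append, contStep]

/-- The weighted distance `|y - y'| / ((q + q' y) (q + q' y'))` is preserved when a branch is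
applied to `y, y'` and the pair `(q, q')` is advanced along the word. -/
lemma cfMap_dist_aux (l : List ℕ) (hl : ∀ a ∈ l, 1 ≤ a) (p : ℕ × ℕ) (hp : 1 ≤ p.1)
    {y y' : ℝ} (hy : 0 ≤ y) (hy' : 0 ≤ y') :
    |cfMap l y - cfMap l y'| / ((p.1 + p.2 * cfMap l y) * (p.1 + p.2 * cfMap l y')) =
      |y - y'| / (((l.foldl contStep p).1 + (l.foldl contStep p).2 * y) *
        ((l.foldl contStep p).1 + (l.foldl contStep p).2 * y')) := by
  induction l generalizing p with
  | nil => rfl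
  | cons a l ih =>
    simp only [List.mem_cons, forall_eq_or_imp] at hl
    have h1 : 1 ≤ (contStep p a).1 := by
      have := Nat.mul_le_mul hl.1 hp
      simp only [contStep]; omega
    rw [List.foldl_cons, ← ih hl.2 _ h1]
    simp only [cfMap, contStep]
    have hc := cfMap_nonneg l hy
    have hc' := cfMap_nonneg l hy'
    set c := cfMap l y
    set c' := cfMap l y'
    have ha : (1 : ℝ) ≤ a := by exact_mod_cast hl.1
    have hq : (1 : ℝ) ≤ p.1 := by exact_mod_cast hp
    have hq' : (0 : ℝ) ≤ p.2 := by positivity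
    have e : 1 / ((a : ℝ) + c) - 1 / (a + c') = (c' - c) / ((a + c) * (a + c')) := by
      field_simp
      ring
    rw [e, abs_div, abs_of_pos (show 0 < ((a : ℝ) + c) * (a + c') by positivity), abs_sub_comm c' c]
    push_cast
    have e1 : (0 : ℝ) < p.1 * (a + c) + p.2 := by positivity
    have e2 : (0 : ℝ) < p.1 * (a + c') + p.2 := by positivity
    have e3 : (p.1 : ℝ) + p.2 * (1 / (a + c)) = (p.1 * (a + c) + p.2) / (a + c) := by
      field_simp
    have e4 : (p.1 : ℝ) + p.2 * (1 / (a + c')) = (p.1 * (a + c') + p.2) / (a + c') := by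
      field_simp
    have e5 : (a : ℝ) * p.1 + p.2 + p.1 * c = p.1 * (a + c) + p.2 := by ring
    have e6 : (a : ℝ) * p.1 + p.2 + p.1 * c' = p.1 * (a + c') + p.2 := by ring
    rw [e3, e4, e5, e6]
    field_simp

lemma cfMap_dist (l : List ℕ) (hl : ∀ a ∈ l, 1 ≤ a) {y y' : ℝ} (hy : 0 ≤ y) (hy' : 0 ≤ y') :
    |cfMap l y - cfMap l y'| ≤ |y - y'| / (contQ l : ℝ) ^ 2 := by
  have h := cfMap_dist_aux l hl (1, 0) le_rfl hy hy'
  have hq : (1 : ℝ) ≤ contQ l := by exact_mod_cast contQ_pos l hl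
  rw [← contQ_eq] at h
  simp only [Nat.cast_one, Nat.cast_zero, zero_mul, add_zero, mul_one, div_one] at h
  rw [h, sq]
  gcongr
  · exact le_add_of_nonneg_right (by positivity)
  · exact le_add_of_nonneg_right (by positivity)

lemma ediam_cfMap_image (l : List ℕ) (hl : ∀ a ∈ l, 1 ≤ a) (r : ℝ) :
    Metric.ediam (cfMap l '' Set.Icc 0 r) ≤ ENNReal.ofReal (r / (contQ l : ℝ) ^ 2) := by
  refine Metric.ediam_le ?_
  rintro _ ⟨y, hy, rfl⟩ _ ⟨y', hy', rfl⟩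
  rw [edist_dist, Real.dist_eq]
  refine ENNReal.ofReal_le_ofReal ((cfMap_dist l hl hy.1 hy'.1).trans ?_)
  gcongr
  rw [abs_le]
  constructor <;> linarith [hy'.1, hy'.2, hy.1, hy.2]

/-! ### Continued fraction digits of irrational numbers -/

lemma gaussMap_mem {x : ℝ} (hi : Irrational x) :
    gaussMap x ∈ Set.Ioo (0 : ℝ) 1 ∧ Irrational (gaussMap x) := by
  have h : Irrational (gaussMap x) := by
    unfold gaussMap
    rw [one_div]
    exact hi.inv.sub_intCast _
  refine ⟨⟨lt_of_le_of_ne ?_ h.ne_zero.symm, ?_⟩, h⟩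
  · exact sub_nonneg.2 (Int.floor_le _)
  · unfold gaussMap
    linarith [Int.lt_floor_add_one (1 / x)]

lemma gaussMap_iterate_mem {x : ℝ} (hx : x ∈ Set.Ioo (0 : ℝ) 1) (hi : Irrational x) (n : ℕ) :
    gaussMap^[n] x ∈ Set.Ioo (0 : ℝ) 1 ∧ Irrational (gaussMap^[n] x) := by
  induction n with
  | zero => exact ⟨hx, hi⟩
  | succ n ih =>
    rw [Function.iterate_succ_apply']
    exact gaussMap_mem ih.2

lemma pq_pos {x : ℝ} (hx : x ∈ Set.Ioo (0 : ℝ) 1) (hi : Irrational x) (n : ℕ) :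
    1 ≤ pq x n := by
  have h := (gaussMap_iterate_mem hx hi (n - 1)).1
  refine Nat.le_floor ?_
  rw [Nat.cast_one, le_div_iff₀ h.1]
  linarith [h.2]

lemma eq_one_div_pq {x : ℝ} (hx : x ∈ Set.Ioo (0 : ℝ) 1) :
    x = 1 / (pq x 1 + gaussMap x) := by
  have h0 : 0 ≤ 1 / x := by have := hx.1; positivity
  have : (pq x 1 : ℝ) = (⌊1 / x⌋ : ℝ) := by
    simp only [pq, Nat.sub_self, Function.iterate_zero, id]
    exact natCast_floor_eq_intCast_floor h0
  rw [this, gaussMap]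
  simp

/-- The list of the first `m` partial quotients of `x`. -/
noncomputable def pref (x : ℝ) (m : ℕ) : List ℕ := List.ofFn fun i : Fin m => pq x (i + 1)

lemma pref_succ (x : ℝ) (m : ℕ) : pref x (m + 1) = pref x m ++ [pq x (m + 1)] := by
  unfold pref
  rw [List.ofFn_succ', List.concat_eq_append]
  simp

lemma cfMap_pref {x : ℝ} (hx : x ∈ Set.Ioo (0 : ℝ) 1) (hi : Irrational x) (m : ℕ) :
    cfMap (pref x m) (gaussMap^[m] x) = x := by
  induction m generalizing x with
  | zero => rfl
  | succ m ih =>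
    have h := ih (gaussMap_mem hi).1 (gaussMap_mem hi).2
    have e : pref x (m + 1) = pq x 1 :: pref (gaussMap x) m := by
      unfold pref
      rw [List.ofFn_succ]
      rfl
    rw [e, cfMap, Function.iterate_succ_apply, h]
    exact (eq_one_div_pq hx).symm

/-- `T^m x` is at most `1 / a_{m+1}(x)`. -/
lemma iterate_le_one_div_pq {x : ℝ} (hx : x ∈ Set.Ioo (0 : ℝ) 1) (hi : Irrational x) (m : ℕ) :
    gaussMap^[m] x ≤ 1 / (pq x (m + 1) : ℝ) := by
  have h := (gaussMap_iterate_mem hx hi m).1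
  have h1 : (1 : ℝ) ≤ pq x (m + 1) := by exact_mod_cast pq_pos hx hi (m + 1)
  have h2 : (pq x (m + 1) : ℝ) ≤ 1 / gaussMap^[m] x :=
    Nat.floor_le (by have := h.1; positivity)
  rw [le_div_iff₀ h.1] at h2
  rw [le_div_iff₀ (by linarith)]
  linarith

/-! ### A Hausdorff measure version of the Borel–Cantelli lemma -/

/-- If the `m`-th family of sets has total `t`-dimensional size at most `w m` and `∑ w m < ∞`, the
points lying in infinitely many of the families form a set of zero `t`-dimensional measure. The
diameters need no separate control: each is at most a tail of `∑ w m` raised to `1 / t`. -/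
lemma hausdorffMeasure_limsup_eq_zero {κ : ℕ → Type} [∀ m, Countable (κ m)]
    (U : ∀ m, κ m → Set ℝ) {t : ℝ} (ht : 0 < t) (w : ℕ → ℝ≥0∞) (hw : ∑' m, w m ≠ ⊤)
    (hU : ∀ᶠ m in atTop, ∑' k, Metric.ediam (U m k) ^ t ≤ w m) :
    μH[t] {x : ℝ | ∃ᶠ m in atTop, ∃ k, x ∈ U m k} = 0 := by
  have htail := ENNReal.tendsto_sum_nat_add w hw
  obtain ⟨M₀, hM₀⟩ := eventually_atTop.1 hU
  have hsum : ∀ M ≥ M₀, ∑' i : (Σ j : ℕ, κ (j + M)), Metric.ediam (U (i.1 + M) i.2) ^ t ≤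
      ∑' j, w (j + M) := by
    intro M hM
    rw [ENNReal.tsum_sigma (fun j (k : κ (j + M)) => Metric.ediam (U (j + M) k) ^ t)]
    exact ENNReal.tsum_le_tsum fun j => hM₀ _ (by omega)
  have key := Measure.hausdorffMeasure_le_liminf_tsum (β := ℕ)
    (ι := fun M => Σ j : ℕ, κ (j + M)) t {x : ℝ | ∃ᶠ m in atTop, ∃ k, x ∈ U m k}
    (l := atTop) (fun M => (∑' j, w (j + M)) ^ (1 / t))
    (by
      have := (ENNReal.continuous_rpow_const (y := 1 / t)).tendsto 0 |>.comp htail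
      rwa [ENNReal.zero_rpow_of_pos (by positivity)] at this)
    (fun M i => U (i.1 + M) i.2)
    (by
      filter_upwards [eventually_ge_atTop M₀] with M hM i
      rw [one_div, ENNReal.le_rpow_inv_iff ht]
      exact (ENNReal.le_tsum i).trans (hsum M hM))
    (by
      refine Eventually.of_forall fun M x hx => ?_
      obtain ⟨m, hm, k, hk⟩ := frequently_atTop.1 hx M
      obtain ⟨j, rfl⟩ := Nat.exists_eq_add_of_le' hm
      exact Set.mem_iUnion.2 ⟨⟨j, k⟩, hk⟩)
  refine le_antisymm (key.trans ?_) zero_le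
  have h0 : Tendsto (fun M => ∑' i : (Σ j : ℕ, κ (j + M)), Metric.ediam (U (i.1 + M) i.2) ^ t)
      atTop (nhds 0) :=
    tendsto_of_tendsto_of_tendsto_of_le_of_le' tendsto_const_nhds htail
      (Eventually.of_forall fun _ => zero_le)
      (by filter_upwards [eventually_ge_atTop M₀] with M hM using hsum M hM)
  exact h0.liminf_eq.le

/-! ### The pressure sums -/

/-- Telescoping: `∑_a 1 / (q_{n+1} (q_{n+1} + q_n)) ≤ 1 / (q_n (q_n + q_{n-1}))`, where
`q_{n+1} = a q_n + q_{n-1}`. -/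
lemma tsum_contStep_le (q q' : ℝ) (hq : 1 ≤ q) (hq' : 0 ≤ q') :
    ∑' a : ℕ+, ENNReal.ofReal (1 / (((a : ℕ) * q + q') * ((a : ℕ) * q + q' + q))) ≤
      ENNReal.ofReal (1 / (q * (q + q'))) := by
  rw [tsum_pnat_eq_tsum_succ (f := fun a : ℕ =>
    ENNReal.ofReal (1 / ((a * q + q') * (a * q + q' + q)))), ENNReal.tsum_eq_iSup_nat]
  refine iSup_le fun K => ?_
  rw [← ENNReal.ofReal_sum_of_nonneg (fun i _ => by positivity)]
  apply ENNReal.ofReal_le_ofReal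
  have : ∀ K : ℕ, ∑ i ∈ Finset.range K,
      1 / ((((i + 1 : ℕ) : ℝ) * q + q') * (((i + 1 : ℕ) : ℝ) * q + q' + q)) =
      1 / (q * (q + q')) - 1 / (q * ((K + 1) * q + q')) := by
    intro K
    induction K with
    | zero => simp
    | succ K ih =>
      rw [Finset.sum_range_succ, ih]
      have h1 : (0 : ℝ) < (K + 1) * q + q' := by positivity
      have h2 : (0 : ℝ) < (K + 1) * q + q' + q := by positivity
      have e : ((K : ℝ) + 1 + 1) * q + q' = (K + 1) * q + q' + q := by ring
      push_cast
      rw [e]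
      field_simp
      ring
  rw [this]
  have : 0 ≤ 1 / (q * ((K + 1) * q + q')) := by positivity
  linarith

lemma tsum_words_le (n : ℕ) (p : ℕ × ℕ) (hp : 1 ≤ p.1) :
    ∑' v : Fin n → ℕ+, ENNReal.ofReal
      (1 / ((((List.ofFn fun i => (v i : ℕ)).foldl contStep p).1 : ℝ) *
        ((((List.ofFn fun i => (v i : ℕ)).foldl contStep p).1 : ℝ) +
          ((List.ofFn fun i => (v i : ℕ)).foldl contStep p).2))) ≤
      ENNReal.ofReal (1 / ((p.1 : ℝ) * (p.1 + p.2))) := by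
  induction n generalizing p with
  | zero => simp
  | succ n ih =>
    rw [← (Fin.consEquiv (fun _ : Fin (n + 1) => ℕ+)).tsum_eq, ENNReal.tsum_prod']
    have hq : (1 : ℝ) ≤ p.1 := by exact_mod_cast hp
    refine le_trans (ENNReal.tsum_le_tsum fun a => ?_)
      (tsum_contStep_le p.1 p.2 hq (by positivity))
    have h := ih (contStep p a) (by
      have := Nat.mul_le_mul (show 1 ≤ (a : ℕ) from a.pos) hp
      simp only [contStep]; omega)
    simp only [contStep, Nat.cast_add, Nat.cast_mul] at h
    simpa [Fin.consEquiv, List.ofFn_succ, contStep] using h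

lemma contQ_word_pos {m : ℕ} (v : Fin m → ℕ+) :
    1 ≤ contQ (List.ofFn fun i => (v i : ℕ)) :=
  contQ_pos _ (by simp [List.mem_ofFn]; exact fun i => (v i).pos)

lemma foldl_contStep_snd_le (l : List ℕ) (hl : ∀ a ∈ l, 1 ≤ a) (p : ℕ × ℕ) (hp : p.2 ≤ p.1) :
    (l.foldl contStep p).2 ≤ (l.foldl contStep p).1 := by
  induction l generalizing p with
  | nil => exact hp
  | cons a l ih =>
    simp only [List.mem_cons, forall_eq_or_imp] at hl
    refine ih hl.2 _ ?_
    have := Nat.mul_le_mul_right p.1 hl.1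
    simp only [contStep]; omega

/-- At `s = 1` the pressure sums are bounded. -/
lemma presSum_one_le {B : ℝ} (hB : 1 < B) (n : ℕ) : presSum B 1 n ≤ 2 := by
  have h := tsum_words_le n (1, 0) le_rfl
  calc presSum B 1 n
    _ ≤ ∑' v : Fin n → ℕ+, 2 * ENNReal.ofReal
          (1 / ((((List.ofFn fun i => (v i : ℕ)).foldl contStep (1, 0)).1 : ℝ) *
        ((((List.ofFn fun i => (v i : ℕ)).foldl contStep (1, 0)).1 : ℝ) +
          ((List.ofFn fun i => (v i : ℕ)).foldl contStep (1, 0)).2))) := by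
        refine ENNReal.tsum_le_tsum fun v => ?_
        have h1 := contQ_word_pos v
        have h2 := foldl_contStep_snd_le (List.ofFn fun i => (v i : ℕ))
          (by simp [List.mem_ofFn]; exact fun i => (v i).pos) (1, 0) (by simp)
        rw [contQ_eq] at h1 ⊢
        set q := ((List.ofFn fun i => (v i : ℕ)).foldl contStep (1, 0)).1
        set q' := ((List.ofFn fun i => (v i : ℕ)).foldl contStep (1, 0)).2
        have hq : (1 : ℝ) ≤ q := by exact_mod_cast h1
        have hq' : (q' : ℝ) ≤ q := by exact_mod_cast h2
        rw [show (2 : ℝ≥0∞) = ENNReal.ofReal 2 by simp, ← ENNReal.ofReal_mul (by norm_num)]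
        apply ENNReal.ofReal_le_ofReal
        have e1 : B ^ (-(n : ℝ) * (3 * 1 - 1 - 1 ^ 2)) ≤ 1 :=
          Real.rpow_le_one_of_one_le_of_nonpos hB.le (by norm_num)
        have e2 : (q : ℝ) ^ (-(2 * 1 : ℝ)) = 1 / (q * q) := by
          rw [Real.rpow_neg (by positivity), mul_one, Real.rpow_two, sq, one_div]
        rw [e2]
        calc _ ≤ 1 * (1 / ((q : ℝ) * q)) := by gcongr
          _ ≤ 2 * (1 / (q * (q + q'))) := by
            rw [one_mul, mul_one_div, div_le_div_iff₀ (by positivity) (by positivity)]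
            nlinarith
    _ ≤ 2 * 1 := by
        rw [ENNReal.tsum_mul_left]
        gcongr
        simpa using h
    _ = 2 := mul_one _

lemma pressure_one_le {B : ℝ} (hB : 1 < B) : pressure B 1 ≤ 0 := by
  have h1 : ∀ᶠ n : ℕ in atTop, (((n : ℝ)⁻¹ : ℝ) : EReal) * ENNReal.log (presSum B 1 n) ≤
      (((n : ℝ)⁻¹ * Real.log 2 : ℝ) : EReal) := by
    refine Eventually.of_forall fun n => ?_
    rw [EReal.coe_mul]
    refine mul_le_mul_of_nonneg_left ?_ (by exact_mod_cast (by positivity : (0 : ℝ) ≤ (n : ℝ)⁻¹))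
    refine (ENNReal.log_le_log (presSum_one_le hB n)).trans ?_
    rw [show (2 : ℝ≥0∞) = ENNReal.ofReal 2 by simp, ENNReal.log_ofReal_of_pos (by norm_num)]
  refine (limsup_le_limsup h1).trans (le_of_eq (Tendsto.limsup_eq ?_))
  have : Tendsto (fun n : ℕ => (n : ℝ)⁻¹ * Real.log 2) atTop (nhds 0) := by
    simpa using (tendsto_inv_atTop_nhds_zero_nat (𝕜 := ℝ)).mul_const (Real.log 2)
  exact (continuous_coe_real_ereal.tendsto 0).comp this

/-- Subexponential growth of the pressure sums when the pressure is nonpositive. -/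
lemma eventually_presSum_le {B s c : ℝ} (hc : 0 < c) (h : pressure B s ≤ 0) :
    ∀ᶠ n : ℕ in atTop, presSum B s n ≤ ENNReal.ofReal (Real.exp (n * c)) := by
  have h1 : limsup (fun n : ℕ => (((n : ℝ)⁻¹ : ℝ) : EReal) * ENNReal.log (presSum B s n)) atTop
      < (c : EReal) := lt_of_le_of_lt h (by exact_mod_cast hc)
  filter_upwards [eventually_lt_of_limsup_lt h1, eventually_gt_atTop 0] with n hn hn0
  have hn' : (0 : ℝ) < n := by exact_mod_cast hn0
  have h2 := mul_le_mul_of_nonneg_left hn.le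
    (show (0 : EReal) ≤ ((n : ℝ) : EReal) by exact_mod_cast hn'.le)
  rw [← mul_assoc, ← EReal.coe_mul, mul_inv_cancel₀ hn'.ne', EReal.coe_one, one_mul,
    ← EReal.coe_mul] at h2
  rw [← ENNReal.log_le_log_iff, ENNReal.log_ofReal_of_pos (Real.exp_pos _), Real.log_exp]
  exact h2

/-- For `s ≤ 1/2` already the words with all digits but the last equal to `1` contribute a
divergent series. -/
lemma half_lt_of_presSum_ne_top {B s : ℝ} (hB : 1 < B) (n : ℕ)
    (hs : 0 ≤ s) (h : presSum B s (n + 1) ≠ ⊤) : 1 / 2 < s := by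
  by_contra! hs2
  apply h
  set c := B ^ (-((n + 1 : ℕ) : ℝ) * (3 * s - 1 - s ^ 2)) with hc
  have hcpos : 0 < c := Real.rpow_pos_of_pos (by linarith) _
  set p := (List.ofFn fun _ : Fin n => 1).foldl contStep (1, 0) with hp
  have hp1 : 1 ≤ p.1 := foldl_contStep_pos _ (by simp) _ le_rfl
  have hinj : Function.Injective fun a : ℕ+ => (Fin.snoc (fun _ => 1) a : Fin (n + 1) → ℕ+) := by
    intro a b hab
    simpa using congrFun hab (Fin.last n)
  refine top_le_iff.1 (le_trans ?_ (ENNReal.tsum_comp_le_tsum_of_injective hinj _))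
  have hF : (0 : ℝ) < p.1 + p.2 := by
    have : (1 : ℝ) ≤ p.1 := by exact_mod_cast hp1
    positivity
  have hbound : ∀ a : ℕ+, ENNReal.ofReal (c * ((p.1 : ℝ) + p.2) ^ (-(2 * s)) *
      ((a : ℕ) : ℝ) ^ (-(2 * s))) ≤
      ENNReal.ofReal (B ^ (-((n + 1 : ℕ) : ℝ) * (3 * s - 1 - s ^ 2)) *
      (contQ (List.ofFn fun i => (((Fin.snoc (fun _ => 1) a : Fin (n + 1) → ℕ+) i : ℕ))) : ℝ)
        ^ (-(2 * s))) := by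
    intro a
    apply ENNReal.ofReal_le_ofReal
    have e : contQ (List.ofFn fun i => (((Fin.snoc (fun _ => 1) a : Fin (n + 1) → ℕ+) i : ℕ))) =
        a * p.1 + p.2 := by
      rw [contQ_eq, List.ofFn_succ', List.concat_eq_append, List.foldl_append]
      simp [contStep, hp]
    have ha : (1 : ℝ) ≤ (a : ℕ) := by exact_mod_cast a.pos
    have hq : (1 : ℝ) ≤ p.1 := by exact_mod_cast hp1
    rw [e, ← hc, mul_assoc, ← Real.mul_rpow hF.le (by positivity)]
    refine mul_le_mul_of_nonneg_left ?_ hcpos.le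
    refine Real.rpow_le_rpow_of_nonpos (by push_cast; positivity) ?_ (by linarith)
    push_cast
    have : (0 : ℝ) ≤ p.2 := by positivity
    nlinarith
  refine le_trans ?_ (ENNReal.tsum_le_tsum hbound)
  rw [top_le_iff]
  by_contra hne
  have hsum := ENNReal.summable_toReal hne
  have hC : 0 < c * ((p.1 : ℝ) + p.2) ^ (-(2 * s)) := mul_pos hcpos (Real.rpow_pos_of_pos hF _)
  have hsum' : Summable fun a : ℕ+ => ((a : ℕ) : ℝ) ^ (-(2 * s)) := by
    refine (summable_mul_left_iff hC.ne').1 (hsum.congr fun a => ?_)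
    exact (ENNReal.toReal_ofReal (by positivity))
  rw [summable_pnat_iff_summable_nat (f := fun a : ℕ => (a : ℝ) ^ (-(2 * s))),
    Real.summable_nat_rpow] at hsum'
  linarith

/-! ### The covering -/

/-- The covering sets of level `m`, with `N = B ^ (m + 2)`. For a word `v` of length `m`, a digit
`a` and an index `b`: if `b = 0`, the set of all `[v, a + z]` with `z ≤ min (a / N) (N ^ (-t))`;
if `b ≥ 1`, the set of all `[v, a, b + z]` with `z ≤ b / N`, provided that `a > N ^ (1 - t)` and
`b < N ^ t`. -/
noncomputable def cover (B t : ℝ) (m : ℕ) (k : (Fin m → ℕ+) × ℕ+ × ℕ) : Set ℝ :=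
  if k.2.2 = 0 then
    cfMap ((List.ofFn fun i => (k.1 i : ℕ)) ++ [(k.2.1 : ℕ)]) ''
      Set.Icc 0 (min ((k.2.1 : ℕ) / B ^ (m + 2)) ((B ^ (m + 2)) ^ (-t)))
  else if (B ^ (m + 2)) ^ (1 - t) < ((k.2.1 : ℕ) : ℝ) ∧ (k.2.2 : ℝ) < (B ^ (m + 2)) ^ t then
    cfMap ((List.ofFn fun i => (k.1 i : ℕ)) ++ [(k.2.1 : ℕ)] ++ [k.2.2]) ''
      Set.Icc 0 (k.2.2 / B ^ (m + 2))
  else ∅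

lemma mem_cover {B t x : ℝ} (hB : 1 < B) (hx : x ∈ Set.Ioo (0 : ℝ) 1) (hi : Irrational x) (m : ℕ)
    (h1 : B ^ (m + 2) ≤ (pq x (m + 1) : ℝ) * (pq x (m + 2) : ℝ))
    (h2 : B ^ (m + 2) ≤ (pq x (m + 2) : ℝ) * (pq x (m + 3) : ℝ)) :
    ∃ k, x ∈ cover B t m k := by
  have hN : (0 : ℝ) < B ^ (m + 2) := by positivity
  set N : ℝ := B ^ (m + 2) with hNdef
  let v : Fin m → ℕ+ := fun i => ⟨pq x (i + 1), pq_pos hx hi _⟩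
  let a : ℕ+ := ⟨pq x (m + 1), pq_pos hx hi _⟩
  have hv : (List.ofFn fun i => (v i : ℕ)) = pref x m := rfl
  have ha : (a : ℕ) = pq x (m + 1) := rfl
  have hapos : (0 : ℝ) < pq x (m + 1) := by exact_mod_cast pq_pos hx hi (m + 1)
  have hbpos : (0 : ℝ) < pq x (m + 2) := by exact_mod_cast pq_pos hx hi (m + 2)
  have hcpos : (0 : ℝ) < pq x (m + 3) := by exact_mod_cast pq_pos hx hi (m + 3)
  rcases le_or_gt (N ^ t) (pq x (m + 2)) with hb | hb
  · refine ⟨(v, a, 0), ?_⟩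
    simp only [cover, if_true, hv, ha, ← pref_succ, ← hNdef]
    refine ⟨gaussMap^[m + 1] x, ⟨(gaussMap_iterate_mem hx hi _).1.1.le, ?_⟩, cfMap_pref hx hi _⟩
    refine (iterate_le_one_div_pq hx hi (m + 1)).trans (le_min ?_ ?_)
    · rw [div_le_div_iff₀ hbpos hN]
      linarith
    · rw [Real.rpow_neg hN.le, ← one_div]
      exact one_div_le_one_div_of_le (Real.rpow_pos_of_pos hN _) hb
  · refine ⟨(v, a, pq x (m + 2)), ?_⟩
    have hb0 : pq x (m + 2) ≠ 0 := by exact_mod_cast hbpos.ne'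
    have hlt : N ^ (1 - t) < (pq x (m + 1) : ℝ) := by
      rw [Real.rpow_sub hN, Real.rpow_one, div_lt_iff₀ (Real.rpow_pos_of_pos hN _)]
      exact h1.trans_lt (mul_lt_mul_of_pos_left hb hapos)
    simp only [cover, hb0, if_false, hv, ha, ← pref_succ, ← hNdef]
    rw [if_pos ⟨hlt, hb⟩]
    refine ⟨gaussMap^[m + 2] x, ⟨(gaussMap_iterate_mem hx hi _).1.1.le, ?_⟩, cfMap_pref hx hi _⟩
    refine (iterate_le_one_div_pq hx hi (m + 2)).trans ?_
    rw [div_le_div_iff₀ hcpos hN]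
    linarith

lemma rpow_bound_zero {N a q t ε : ℝ} (hN : 1 ≤ N) (ha : 1 ≤ a) (hq : 1 ≤ q) (ht : 1 / 2 < t)
    (ht1 : t < 1) (hε : 0 < ε) (hε' : ε ≤ 2 * t - 1) :
    (min (a / N) (N ^ (-t)) / (a * q) ^ 2) ^ t ≤
      N ^ (ε - (3 * t - 1 - t ^ 2)) * q ^ (-(2 * t)) * a ^ (-1 - ε) := by
  obtain ⟨ν, rfl⟩ : ∃ ν, N = Real.exp ν := ⟨_, (Real.exp_log (by linarith)).symm⟩
  obtain ⟨α, rfl⟩ : ∃ α, a = Real.exp α := ⟨_, (Real.exp_log (by linarith)).symm⟩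
  obtain ⟨κ, rfl⟩ : ∃ κ, q = Real.exp κ := ⟨_, (Real.exp_log (by linarith)).symm⟩
  rw [Real.one_le_exp_iff] at hN ha hq
  rcases le_total α ((1 - t) * ν) with h | h
  · calc _ ≤ (Real.exp α / Real.exp ν / (Real.exp α * Real.exp κ) ^ 2) ^ t := by
          have := Real.exp_pos α
          gcongr
          exact min_le_left _ _
      _ ≤ _ := by
          rw [← Real.exp_add, ← Real.exp_nat_mul]
          simp only [← Real.exp_mul, ← Real.exp_sub, ← Real.exp_add]
          rw [Real.exp_le_exp]
          push_cast
          nlinarith [mul_le_mul_of_nonneg_right h (show 0 ≤ 1 + ε - t by linarith),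
            mul_nonneg hN (mul_nonneg hε.le (show 0 ≤ t by linarith))]
  · calc _ ≤ (Real.exp ν ^ (-t) / (Real.exp α * Real.exp κ) ^ 2) ^ t := by
          have := Real.exp_pos α
          gcongr
          exact min_le_right _ _
      _ ≤ _ := by
          rw [← Real.exp_add, ← Real.exp_nat_mul]
          simp only [← Real.exp_mul, ← Real.exp_sub, ← Real.exp_add]
          rw [Real.exp_le_exp]
          push_cast
          nlinarith [mul_le_mul_of_nonneg_right h (show 0 ≤ 2 * t - 1 - ε by linarith),
            mul_nonneg hN (mul_nonneg hε.le (show 0 ≤ t by linarith))]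

lemma rpow_bound_pos {N a b q t ε : ℝ} (hN : 1 ≤ N) (ha : 1 ≤ a) (hb : 1 ≤ b) (hq : 1 ≤ q)
    (ht1 : t < 1) (hε : 0 < ε) (hε' : ε ≤ 2 * t - 1)
    (h1 : N ^ (1 - t) < a) (h2 : b < N ^ t) :
    (b / N / (a * b * q) ^ 2) ^ t ≤
      N ^ (ε - (3 * t - 1 - t ^ 2)) * q ^ (-(2 * t)) * a ^ (-1 - ε) * b ^ (-1 - ε) := by
  obtain ⟨ν, rfl⟩ : ∃ ν, N = Real.exp ν := ⟨_, (Real.exp_log (by linarith)).symm⟩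
  obtain ⟨α, rfl⟩ : ∃ α, a = Real.exp α := ⟨_, (Real.exp_log (by linarith)).symm⟩
  obtain ⟨β, rfl⟩ : ∃ β, b = Real.exp β := ⟨_, (Real.exp_log (by linarith)).symm⟩
  obtain ⟨κ, rfl⟩ : ∃ κ, q = Real.exp κ := ⟨_, (Real.exp_log (by linarith)).symm⟩
  rw [← Real.exp_mul, Real.exp_lt_exp] at h1 h2
  simp only [← Real.exp_add, ← Real.exp_nat_mul]
  simp only [← Real.exp_mul, ← Real.exp_sub, ← Real.exp_add]
  rw [Real.exp_le_exp]
  push_cast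
  nlinarith [mul_le_mul_of_nonneg_right h1.le (show 0 ≤ 2 * t - 1 - ε by linarith),
    mul_le_mul_of_nonneg_right h2.le (show 0 ≤ 1 + ε - t by linarith)]

/-- The weight of the index `b` in the bound for the covering; `b = 0` stands for the set in which
the digit after `a` is not fixed. -/
noncomputable def wt (ε : ℝ) (b : ℕ) : ℝ := (b : ℝ) ^ (-1 - ε) + if b = 0 then 1 else 0

lemma summable_wt {ε : ℝ} (hε : 0 < ε) : Summable (wt ε) := by
  refine (Real.summable_nat_rpow.2 (by linarith)).add ?_
  exact summable_of_ne_finset_zero (s := {0}) (fun b hb => by simp at hb; simp [hb])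

lemma ediam_cover_le {B t ε : ℝ} (hB : 1 < B) (ht : 1 / 2 < t) (ht1 : t < 1) (hε : 0 < ε)
    (hε' : ε ≤ 2 * t - 1) (m : ℕ) (v : Fin m → ℕ+) (a : ℕ+) (b : ℕ) :
    Metric.ediam (cover B t m (v, a, b)) ^ t ≤
      ENNReal.ofReal ((B ^ (m + 2)) ^ (ε - (3 * t - 1 - t ^ 2)) *
        (contQ (List.ofFn fun i => (v i : ℕ)) : ℝ) ^ (-(2 * t))) *
      (ENNReal.ofReal (((a : ℕ) : ℝ) ^ (-1 - ε)) * ENNReal.ofReal (wt ε b)) := by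
  have hN : (1 : ℝ) ≤ B ^ (m + 2) := one_le_pow₀ hB.le
  have hq : (1 : ℝ) ≤ contQ (List.ofFn fun i => (v i : ℕ)) := by exact_mod_cast contQ_word_pos v
  have ha : (1 : ℝ) ≤ (a : ℕ) := by exact_mod_cast a.pos
  have hl : ∀ d ∈ (List.ofFn fun i => (v i : ℕ)), 1 ≤ d := by
    simp [List.mem_ofFn]; exact fun i => (v i).pos
  have hla : ∀ d ∈ (List.ofFn fun i => (v i : ℕ)) ++ [(a : ℕ)], 1 ≤ d := by
    intro d hd
    rcases List.mem_append.1 hd with h | h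
    · exact hl d h
    · rw [List.mem_singleton.1 h]; exact a.pos
  have hqa : ((a : ℕ) : ℝ) * contQ (List.ofFn fun i => (v i : ℕ)) ≤
      contQ ((List.ofFn fun i => (v i : ℕ)) ++ [(a : ℕ)]) := by
    exact_mod_cast contQ_append_singleton _ _
  rw [← ENNReal.ofReal_mul (by positivity), ← ENNReal.ofReal_mul (by positivity)]
  set l := List.ofFn fun i => (v i : ℕ)
  set N := B ^ (m + 2) with hNdef
  rcases Nat.eq_zero_or_pos b with rfl | hb
  · simp only [cover, if_true, ← hNdef]
    have hmin : 0 ≤ min (((a : ℕ) : ℝ) / N) (N ^ (-t)) := by positivity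
    refine (ENNReal.rpow_le_rpow (ediam_cfMap_image _ hla _) (by linarith)).trans ?_
    rw [ENNReal.ofReal_rpow_of_nonneg (by positivity) (by linarith)]
    apply ENNReal.ofReal_le_ofReal
    refine le_trans ?_ ((rpow_bound_zero hN ha hq ht ht1 hε hε').trans (le_of_eq ?_))
    · gcongr
    · have : (0 : ℝ) ^ (-1 - ε) = 0 := Real.zero_rpow (by linarith)
      simp [wt, this, mul_assoc]
  · simp only [cover, hb.ne', if_false, ← hNdef]
    split_ifs with hc
    · have hb1 : (1 : ℝ) ≤ b := by exact_mod_cast hb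
      have hlb : ∀ d ∈ l ++ [(a : ℕ)] ++ [b], 1 ≤ d := by
        intro d hd
        rcases List.mem_append.1 hd with h | h
        · exact hla d h
        · rw [List.mem_singleton.1 h]; exact hb
      have hqb : ((a : ℕ) : ℝ) * b * contQ l ≤ contQ (l ++ [(a : ℕ)] ++ [b]) := by
        have h := contQ_append_singleton (l ++ [(a : ℕ)]) b
        have h' : (b : ℝ) * contQ (l ++ [(a : ℕ)]) ≤ contQ (l ++ [(a : ℕ)] ++ [b]) := by
          exact_mod_cast h
        nlinarith
      refine (ENNReal.rpow_le_rpow (ediam_cfMap_image _ hlb _) (by linarith)).trans ?_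
      rw [ENNReal.ofReal_rpow_of_nonneg (by positivity) (by linarith)]
      apply ENNReal.ofReal_le_ofReal
      refine le_trans ?_
        ((rpow_bound_pos hN ha hb1 hq ht1 hε hε' hc.1 hc.2).trans (le_of_eq ?_))
      · gcongr
      · simp [wt, hb.ne', mul_assoc]
    · rw [Metric.ediam_empty, ENNReal.zero_rpow_of_pos (by linarith)]
      exact zero_le

/-- The total size of the covering of level `m` at exponent `t` is at most a constant times
`B ^ (m (ε - δ))` times the pressure sum at `s`, where `δ = (3t - 1 - t²) - (3s - 1 - s²)`. -/
lemma tsum_cover_le {B s t ε : ℝ} (hB : 1 < B) (hst : s ≤ t) (ht : 1 / 2 < t) (ht1 : t < 1)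
    (hε : 0 < ε) (hε' : ε ≤ 2 * t - 1) (m : ℕ) :
    ∑' k, Metric.ediam (cover B t m k) ^ t ≤
      ENNReal.ofReal (B ^ (2 * (ε - (3 * t - 1 - t ^ 2))) *
        B ^ (m * (ε - ((3 * t - 1 - t ^ 2) - (3 * s - 1 - s ^ 2))))) * presSum B s m *
      ((∑' a : ℕ+, ENNReal.ofReal (((a : ℕ) : ℝ) ^ (-1 - ε))) *
        ∑' b : ℕ, ENNReal.ofReal (wt ε b)) := by
  have hB0 : 0 < B := by linarith
  rw [ENNReal.tsum_prod', presSum, ← ENNReal.tsum_mul_left, ← ENNReal.tsum_mul_right]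
  refine ENNReal.tsum_le_tsum fun v => ?_
  rw [ENNReal.tsum_prod', ← ENNReal.tsum_mul_right, ← ENNReal.tsum_mul_left]
  refine ENNReal.tsum_le_tsum fun a => ?_
  rw [← ENNReal.tsum_mul_left, ← ENNReal.tsum_mul_left]
  refine ENNReal.tsum_le_tsum fun b => ?_
  refine (ediam_cover_le hB ht ht1 hε hε' m v a b).trans ?_
  gcongr
  rw [← ENNReal.ofReal_mul (by positivity)]
  apply ENNReal.ofReal_le_ofReal
  have hq : (1 : ℝ) ≤ contQ (List.ofFn fun i => (v i : ℕ)) := by exact_mod_cast contQ_word_pos v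
  rw [← mul_assoc, ← Real.rpow_add hB0, ← Real.rpow_add hB0]
  have e : (B ^ (m + 2)) ^ (ε - (3 * t - 1 - t ^ 2)) =
      B ^ (2 * (ε - (3 * t - 1 - t ^ 2)) + m * (ε - ((3 * t - 1 - t ^ 2) - (3 * s - 1 - s ^ 2))) +
        -(m : ℝ) * (3 * s - 1 - s ^ 2)) := by
    rw [← Real.rpow_natCast, ← Real.rpow_mul hB0.le]
    congr 1
    push_cast
    ring
  rw [e]
  gcongr

lemma dimH_le_of_gt {B s t : ℝ} (hB : 1 < B) (hs0 : 0 ≤ s) (hs : pressure B s ≤ 0) (hst : s < t)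
    (ht1 : t < 1) :
    dimH {x : ℝ | x ∈ Set.Ioo (0 : ℝ) 1 ∧ Irrational x ∧
      {n : ℕ | 2 ≤ n ∧ B ^ n ≤ (pq x (n - 1) : ℝ) * (pq x n : ℝ) ∧
        B ^ n ≤ (pq x n : ℝ) * (pq x (n + 1) : ℝ)}.Infinite} ≤ ENNReal.ofReal t := by
  have hB0 : 0 < B := by linarith
  have hlog : 0 < Real.log B := Real.log_pos hB
  have hhalf : 1 / 2 < s := by
    obtain ⟨M, hM⟩ := eventually_atTop.1 (eventually_presSum_le one_pos hs)
    exact half_lt_of_presSum_ne_top hB M hs0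
      (ne_top_of_le_ne_top ENNReal.ofReal_ne_top (hM (M + 1) (by omega)))
  set δ := (3 * t - 1 - t ^ 2) - (3 * s - 1 - s ^ 2) with hδ
  have hδ0 : 0 < δ := by
    have : 0 < (t - s) * (3 - t - s) := mul_pos (by linarith) (by linarith)
    rw [hδ]; nlinarith
  -- The excess `δ` of the exponent pays for the loss `ε` in the covering and for the
  -- subexponential growth of the pressure sums, with `δ / 3` to spare.
  set ε := min (δ / 3) (2 * t - 1)
  have hε : 0 < ε := lt_min (by linarith) (by linarith)
  have hε1 : ε ≤ δ / 3 := min_le_left _ _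
  set Z := (∑' a : ℕ+, ENNReal.ofReal (((a : ℕ) : ℝ) ^ (-1 - ε))) *
        ∑' b : ℕ, ENNReal.ofReal (wt ε b) with hZ
  have hZtop : Z ≠ ⊤ := by
    refine ENNReal.mul_ne_top ?_ (summable_wt hε).tsum_ofReal_ne_top
    refine Summable.tsum_ofReal_ne_top ?_
    rw [summable_pnat_iff_summable_nat (f := fun a : ℕ => (a : ℝ) ^ (-1 - ε)),
      Real.summable_nat_rpow]
    linarith
  set K := B ^ (2 * (ε - (3 * t - 1 - t ^ 2))) with hK
  have hzero := hausdorffMeasure_limsup_eq_zero (cover B t) (t := t) (by linarith)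
    (fun m => ENNReal.ofReal (K * (B ^ (-(δ / 3))) ^ m) * Z)
    (by
      rw [ENNReal.tsum_mul_right]
      refine ENNReal.mul_ne_top (Summable.tsum_ofReal_ne_top ?_) hZtop
      refine (summable_geometric_of_lt_one (by positivity) ?_).mul_left K
      exact Real.rpow_lt_one_of_one_lt_of_neg hB (by linarith))
    (by
      filter_upwards [eventually_presSum_le (c := δ / 3 * Real.log B) (by positivity) hs]
        with m hm
      refine (tsum_cover_le hB hst.le (by linarith) ht1 hε (min_le_right _ _) m).trans ?_
      rw [← hZ, ← hK]
      refine mul_le_mul_left ?_ Z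
      refine (mul_le_mul_right hm _).trans ?_
      rw [← ENNReal.ofReal_mul (by positivity)]
      apply ENNReal.ofReal_le_ofReal
      have e : Real.exp (m * (δ / 3 * Real.log B)) = B ^ (m * (δ / 3)) := by
        rw [Real.rpow_def_of_pos hB0]
        ring_nf
      rw [← hδ, e, mul_assoc, ← Real.rpow_add hB0, ← Real.rpow_natCast (B ^ (-(δ / 3))),
        ← Real.rpow_mul hB0.le]
      gcongr
      · exact hB.le
      · have : (0 : ℝ) ≤ m := by positivity
        nlinarith)
  have hsub : {x : ℝ | x ∈ Set.Ioo (0 : ℝ) 1 ∧ Irrational x ∧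
      {n : ℕ | 2 ≤ n ∧ B ^ n ≤ (pq x (n - 1) : ℝ) * (pq x n : ℝ) ∧
        B ^ n ≤ (pq x n : ℝ) * (pq x (n + 1) : ℝ)}.Infinite} ⊆
      {x : ℝ | ∃ᶠ m in atTop, ∃ k, x ∈ cover B t m k} := by
    rintro x ⟨hx, hi, hinf⟩
    refine frequently_atTop.2 fun M => ?_
    obtain ⟨n, ⟨hn2, h1, h2⟩, hn⟩ := hinf.exists_gt (M + 2)
    obtain ⟨m, rfl⟩ := Nat.exists_eq_add_of_le' hn2
    exact ⟨m, by omega, mem_cover hB hx hi m h1 h2⟩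
  refine (dimH_mono hsub).trans ?_
  have ht0 : 0 ≤ t := by linarith
  refine dimH_le_of_hausdorffMeasure_ne_top (d := t.toNNReal) ?_
  rw [Real.coe_toNNReal _ ht0, hzero]
  exact ENNReal.zero_ne_top

theorem dimH_frakF1_le (B : ℝ) (hB : 1 < B) :
    dimH {x : ℝ | x ∈ Set.Ioo (0 : ℝ) 1 ∧ Irrational x ∧
      {n : ℕ | 2 ≤ n ∧ B ^ n ≤ (pq x (n - 1) : ℝ) * (pq x n : ℝ) ∧
        B ^ n ≤ (pq x n : ℝ) * (pq x (n + 1) : ℝ)}.Infinite} ≤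
      ENNReal.ofReal (sB B) := by
  have hne : {s : ℝ | 0 ≤ s ∧ pressure B s ≤ 0}.Nonempty := ⟨1, zero_le_one, pressure_one_le hB⟩
  rcases le_or_gt 1 (sB B) with h | h
  · refine (dimH_mono (Set.subset_univ _)).trans ?_
    rw [Real.dimH_univ]
    exact ENNReal.one_le_ofReal.2 h
  · have htend : Tendsto (fun t : ℝ => ENNReal.ofReal t) (nhdsWithin (sB B) (Set.Ioi (sB B)))
        (nhds (ENNReal.ofReal (sB B))) :=
      (ENNReal.continuous_ofReal.tendsto _).mono_left nhdsWithin_le_nhds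
    refine ge_of_tendsto htend ?_
    filter_upwards [Ioo_mem_nhdsGT h] with t ht
    obtain ⟨s, ⟨hs0, hs⟩, hst⟩ := exists_lt_of_csInf_lt hne ht.1
    exact dimH_le_of_gt hB hs0 hs hst ht.2
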